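/- A multigraph G = (V,E) is a P(2,1)-graph if and only if G can be constructed from K₁¹ (a single vertex with one loop) or K₂³ (two vertices joined by three parallel edges) by a finite sequence of the following moves: (1a) add a new vertex of degree 2 joined by single edges to two distinct existing vertices; (1b) add a new vertex joined by two parallel edges to one existing vertex; (2a) delete an edge v₁v₂ with v₁ ≠ v₂ and add a new vertex v₀ of degree 3 adjacent to v₁, v₂ and some existing vertex v₃; (2b) delete an edge v₁v₂ with v₁ ≠ v₂ and add a new vertex v₀ joined by one edge to v₁ and two parallel edges to v₂. -/

import Mathlib

/-! ### Multigraphs: finite vertex set `V`, finite edge set `E`; each edge `e` has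
endpoints `src e` and `dst e` (loops and parallel edges are allowed). -/

structure Multigraph (V E : Type) where
  src : E → V
  dst : E → V

namespace Multigraph

variable {V E : Type}

/-- `i(X)`: the number of edges both of whose endpoints lie in `X`. -/
def iCount [Fintype E] [DecidableEq V] (G : Multigraph V E) (X : Finset V) : ℕ :=
  (Finset.univ.filter fun e => G.src e ∈ X ∧ G.dst e ∈ X).card

/-- The degree of a vertex (a loop contributes 2). -/
def degree [Fintype E] [DecidableEq V] (G : Multigraph V E) (v : V) : ℕ :=
  (Finset.univ.filter fun e => G.src e = v).card +
    (Finset.univ.filter fun e => G.dst e = v).card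

/-- The set of neighbours of a vertex. -/
def neighborSet (G : Multigraph V E) (v : V) : Set V :=
  {w | ∃ e, (G.src e = v ∧ G.dst e = w) ∨ (G.src e = w ∧ G.dst e = v)}

/-- `(k,ℓ)`-sparsity: `i(X) ≤ k|X| − ℓ` for every `X ⊆ V` spanning at least one edge. -/
def Sparse [Fintype E] [DecidableEq V] (G : Multigraph V E) (k l : ℤ) : Prop :=
  ∀ X : Finset V, (∃ e, G.src e ∈ X ∧ G.dst e ∈ X) →
    (G.iCount X : ℤ) ≤ k * (X.card : ℤ) - l

/-- `(k,ℓ)`-tightness: `(k,ℓ)`-sparse and `|E| = k|V| − ℓ`. -/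
def Tight [Fintype V] [Fintype E] [DecidableEq V] (G : Multigraph V E) (k l : ℤ) : Prop :=
  G.Sparse k l ∧ (Fintype.card E : ℤ) = k * (Fintype.card V : ℤ) - l

/-- Delete a single edge. -/
def deleteEdge (G : Multigraph V E) (e₀ : E) : Multigraph V {e : E // e ≠ e₀} :=
  ⟨fun e => G.src e.1, fun e => G.dst e.1⟩

/-- Delete a vertex together with all edges incident to it. -/
def deleteVertex (G : Multigraph V E) (v : V) :
    Multigraph {w : V // w ≠ v} {e : E // G.src e ≠ v ∧ G.dst e ≠ v} :=
  ⟨fun e => ⟨G.src e.1, e.2.1⟩, fun e => ⟨G.dst e.1, e.2.2⟩⟩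

/-- Add one new edge with endpoints `u` and `w`. -/
def addEdge (G : Multigraph V E) (u w : V) : Multigraph V (E ⊕ Unit) :=
  ⟨Sum.elim G.src fun _ => u, Sum.elim G.dst fun _ => w⟩

/-- The subgraph induced by a set of vertices `X`. -/
def induce (G : Multigraph V E) (X : Finset V) :
    Multigraph {v : V // v ∈ X} {e : E // G.src e ∈ X ∧ G.dst e ∈ X} :=
  ⟨fun e => ⟨G.src e.1, e.2.1⟩, fun e => ⟨G.dst e.1, e.2.2⟩⟩

/-- `G` is a `P(2,1)`-graph: `(2,1)`-tight and some edge-deleted graph is `(2,2)`-tight. -/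
def IsP21 [Fintype V] [Fintype E] [DecidableEq V] [DecidableEq E] (G : Multigraph V E) : Prop :=
  G.Tight 2 1 ∧ ∃ e : E, (G.deleteEdge e).Tight 2 2

/-- `G` is a `(2,2)`-circuit: `|E| = 2|V| − 1` and every edge-deleted graph is `(2,2)`-tight. -/
def IsCircuit22 [Fintype V] [Fintype E] [DecidableEq V] [DecidableEq E]
    (G : Multigraph V E) : Prop :=
  (Fintype.card E : ℤ) = 2 * (Fintype.card V : ℤ) - 1 ∧
    ∀ e : E, (G.deleteEdge e).Tight 2 2

/-- `X` is an over-critical set (`i(X) = 2|X| − 1`) of minimum cardinality. -/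
def IsMinOverCritical [Fintype E] [DecidableEq V] (G : Multigraph V E) (X : Finset V) : Prop :=
  (G.iCount X : ℤ) = 2 * (X.card : ℤ) - 1 ∧
    ∀ Y : Finset V, (G.iCount Y : ℤ) = 2 * (Y.card : ℤ) - 1 → X.card ≤ Y.card

/-- `G` is (a copy of) `K₂³`: two distinct vertices joined by three parallel edges. -/
def IsK23 [Fintype E] (G : Multigraph V E) : Prop :=
  ∃ a b : V, a ≠ b ∧ (∀ v : V, v = a ∨ v = b) ∧ Fintype.card E = 3 ∧
    ∀ e : E, (G.src e = a ∧ G.dst e = b) ∨ (G.src e = b ∧ G.dst e = a)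

/-- Adjacency via an edge belonging to the edge subset `F`. -/
def AdjOn (G : Multigraph V E) (F : Set E) (u w : V) : Prop :=
  ∃ e ∈ F, (G.src e = u ∧ G.dst e = w) ∨ (G.src e = w ∧ G.dst e = u)

/-- Connectivity of the multigraph. -/
def Connected (G : Multigraph V E) : Prop :=
  Nonempty V ∧ ∀ u w : V, Relation.ReflTransGen (G.AdjOn Set.univ) u w

/-- 2-edge-connectivity: connected, and still connected after deleting any one edge. -/
def TwoEdgeConnected (G : Multigraph V E) : Prop :=
  G.Connected ∧ ∀ e₀ : E, ∀ u w : V, Relation.ReflTransGen (G.AdjOn {e | e ≠ e₀}) u w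

/-- Adjacency inside the induced subgraph on the vertex set `X`. -/
def AdjIn (G : Multigraph V E) (X : Set V) (u w : V) : Prop :=
  u ∈ X ∧ w ∈ X ∧ ∃ e, (G.src e = u ∧ G.dst e = w) ∨ (G.src e = w ∧ G.dst e = u)

/-- Connectivity of the induced subgraph on the vertex set `X`. -/
def ConnectedOn (G : Multigraph V E) (X : Set V) : Prop :=
  ∀ u ∈ X, ∀ w ∈ X, Relation.ReflTransGen (G.AdjIn X) u w

/-- `T` is the edge set of a spanning tree of `G`:
the spanning subgraph with edge set `T` is connected and `|T| = |V| − 1`. -/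
def IsSpanningTree [Fintype V] (G : Multigraph V E) (T : Finset E) : Prop :=
  (∀ u w : V, Relation.ReflTransGen (G.AdjOn (T : Set E)) u w) ∧ T.card + 1 = Fintype.card V

/-- `M` is the edge set of a spanning connected map-graph of `G`:
the spanning subgraph with edge set `M` is connected and has exactly `|V|` edges
(equivalently, it is connected with exactly one cycle). -/
def IsConnectedSpanningMapGraph [Fintype V] (G : Multigraph V E) (M : Finset E) : Prop :=
  (∀ u w : V, Relation.ReflTransGen (G.AdjOn (M : Set E)) u w) ∧ M.card = Fintype.card V

/-- `(X, F)` describes a subgraph of `G`: every edge of `F` has both endpoints in `X`. -/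
def IsSubgraphOn (G : Multigraph V E) (X : Finset V) (F : Finset E) : Prop :=
  ∀ e ∈ F, G.src e ∈ X ∧ G.dst e ∈ X

end Multigraph

/-! ### Bundled multigraphs and the (unlabelled) Henneberg operations. -/

structure BMG where
  V : Type
  E : Type
  fV : Fintype V
  fE : Fintype E
  dV : DecidableEq V
  dE : DecidableEq E
  G : Multigraph V E

attribute [instance] BMG.fV BMG.fE BMG.dV BMG.dE

/-- Isomorphism of multigraphs: bijections of vertices and edges preserving the
(unordered) pair of endpoints of every edge. -/
def BMGIso (A B : BMG) : Prop :=
  ∃ (φ : A.V ≃ B.V) (ψ : A.E ≃ B.E), ∀ e : A.E,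
    (B.G.src (ψ e) = φ (A.G.src e) ∧ B.G.dst (ψ e) = φ (A.G.dst e)) ∨
    (B.G.src (ψ e) = φ (A.G.dst e) ∧ B.G.dst (ψ e) = φ (A.G.src e))

/-- Add a new vertex (the vertex `none`) joined by two new edges to `v1` and `v2`. -/
def BMG.addV2 (A : BMG) (v1 v2 : A.V) : BMG where
  V := Option A.V
  E := A.E ⊕ Fin 2
  fV := inferInstance
  fE := inferInstance
  dV := inferInstance
  dE := inferInstance
  G := ⟨Sum.elim (fun e => some (A.G.src e)) fun _ => none,
        Sum.elim (fun e => some (A.G.dst e)) ![some v1, some v2]⟩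

/-- Delete the edge `e₀` and add a new vertex (the vertex `none`) joined by three
new edges to `t1`, `t2`, `t3`. -/
def BMG.split (A : BMG) (e₀ : A.E) (t1 t2 t3 : A.V) : BMG where
  V := Option A.V
  E := {e : A.E // e ≠ e₀} ⊕ Fin 3
  fV := inferInstance
  fE := inferInstance
  dV := inferInstance
  dE := inferInstance
  G := ⟨Sum.elim (fun e => some (A.G.src e.1)) fun _ => none,
        Sum.elim (fun e => some (A.G.dst e.1)) ![some t1, some t2, some t3]⟩

/-- One Henneberg move `A ⟶ B` (up to isomorphism): 1a, 1b, 2a or 2b. -/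
def MStep (A B : BMG) : Prop :=
  -- (1a) add a new vertex of degree 2 joined by single edges to two distinct
  -- existing vertices
  (∃ v1 v2 : A.V, v1 ≠ v2 ∧ BMGIso (A.addV2 v1 v2) B) ∨
  -- (1b) add a new vertex joined by two parallel edges to one existing vertex
  (∃ v : A.V, BMGIso (A.addV2 v v) B) ∨
  -- (2a) delete an edge v1v2 (v1 ≠ v2) and add a new vertex of degree 3 adjacent to
  -- v1, v2 and some existing vertex v3
  (∃ (e₀ : A.E) (v3 : A.V), A.G.src e₀ ≠ A.G.dst e₀ ∧
    v3 ≠ A.G.src e₀ ∧ v3 ≠ A.G.dst e₀ ∧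
    BMGIso (A.split e₀ (A.G.src e₀) (A.G.dst e₀) v3) B) ∨
  -- (2b) delete an edge v1v2 (v1 ≠ v2) and add a new vertex joined by one edge to v1
  -- and two parallel edges to v2
  (∃ (e₀ : A.E) (v1 v2 : A.V), v1 ≠ v2 ∧
    ((A.G.src e₀ = v1 ∧ A.G.dst e₀ = v2) ∨ (A.G.src e₀ = v2 ∧ A.G.dst e₀ = v1)) ∧
    BMGIso (A.split e₀ v1 v2 v2) B)

/-- `K₁¹`: a single vertex with one loop. -/
def K11 : BMG where
  V := Unit
  E := Unit
  fV := inferInstance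
  fE := inferInstance
  dV := inferInstance
  dE := inferInstance
  G := ⟨fun _ => (), fun _ => ()⟩

/-- `K₂³`: two vertices joined by three parallel edges. -/
def K23 : BMG where
  V := Bool
  E := Fin 3
  fV := inferInstance
  fE := inferInstance
  dV := inferInstance
  dE := inferInstance
  G := ⟨fun _ => false, fun _ => true⟩

/-!
Adding a vertex of degree `k` preserves and reflects `(k, l)`-tightness, and splitting an edge
with a new vertex of degree `k + 1` preserves it; this shows that all moves preserve
`P(2,1)`-graphs. Conversely, let `G` be a `P(2,1)`-graph with at least two vertices, with `G - e`
`(2,2)`-tight. All degrees are at least `2` and sum to `4 |V| - 2`, so there is a vertex of degree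
`2` or there are two of degree `3`. A vertex of degree `2` can be removed. At a vertex of degree
`3` with distinct neighbours, uncrossing critical sets shows that some split edge can be restored.
A vertex of degree `3` with a single neighbour is joined to it by three parallel edges, one of
which is `e`, because `G - e` has at most two; so if there are two such vertices, they are the two
ends of `e`, and tightness of `G - e` leaves no room for further vertices: `G = K₂³`.
-/

namespace Multigraph

open Finset

variable {V E ι : Type}

/-- The unordered pair of endpoints of an edge: all that isomorphism-invariant notions see of the
orientation `src`, `dst`. -/
def ends (G : Multigraph V E) (e : E) : Sym2 V :=
  s(G.src e, G.dst e)

/-- The edges of `F` spanned by `X`; thus `i(X)` is the case `F = E` of `#(G.edgesIn F X)`. -/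
def edgesIn [DecidableEq V] (G : Multigraph V E) (F : Finset E) (X : Finset V) : Finset E :=
  {e ∈ F | G.ends e ∈ X.sym2}

/-- The edges having `v` as an endpoint. -/
def incidentEdges [Fintype E] [DecidableEq V] (G : Multigraph V E) (v : V) : Finset E :=
  {e | v ∈ G.ends e}

/-- The spanning subgraph `(V, F)` is `(k, l)`-sparse. Quantifying over nonempty `X` agrees with
quantifying over `X` spanning an edge when `l ≤ k`. -/
def SparseOn [DecidableEq V] (G : Multigraph V E) (F : Finset E) (k l : ℕ) : Prop :=
  ∀ X : Finset V, X.Nonempty → #(G.edgesIn F X) + l ≤ k * #X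

/-- The spanning subgraph `(V, F)` is `(k, l)`-tight. -/
def TightOn [Fintype V] [DecidableEq V] (G : Multigraph V E) (F : Finset E) (k l : ℕ) : Prop :=
  G.SparseOn F k l ∧ #F + l = k * Fintype.card V

/-- `X` is a critical set of `(V, F)`: the `(k, l)`-sparsity bound is attained at `X`. -/
def IsCriticalOn [DecidableEq V] (G : Multigraph V E) (F : Finset E) (k l : ℕ) (X : Finset V) :
    Prop :=
  #(G.edgesIn F X) + l = k * #X

/-- Add a new vertex `none`, joined by one edge to `t i` for each `i`. -/
def attachVertex (G : Multigraph V E) (t : ι → V) : Multigraph (Option V) (E ⊕ ι) :=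
  ⟨Sum.elim (some ∘ G.src) fun _ => none, Sum.elim (some ∘ G.dst) (some ∘ t)⟩

/-- The bundled form of a finite multigraph. -/
abbrev toBMG [Fintype V] [Fintype E] [DecidableEq V] [DecidableEq E] (G : Multigraph V E) : BMG :=
  ⟨V, E, inferInstance, inferInstance, inferInstance, inferInstance, G⟩

/-! ### Sparsity of edge subsets -/

section Sparsity

variable [DecidableEq V] {G : Multigraph V E} {F : Finset E} {k l : ℕ} {X Y : Finset V}

theorem mem_edgesIn {e : E} : e ∈ G.edgesIn F X ↔ e ∈ F ∧ ∀ v ∈ G.ends e, v ∈ X := by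
  rw [edgesIn, mem_filter, mem_sym2_iff]

theorem edgesIn_subset : G.edgesIn F X ⊆ F :=
  filter_subset _ _

theorem edgesIn_univ [Fintype V] : G.edgesIn F univ = F := by
  ext e
  simp [mem_edgesIn]

theorem edgesIn_empty : G.edgesIn F ∅ = ∅ := by
  simp [edgesIn]

theorem mem_incidentEdges [Fintype E] {e : E} {v : V} :
    e ∈ G.incidentEdges v ↔ v ∈ G.ends e := by
  simp [incidentEdges]

theorem card_edgesIn_add_card_edgesIn_le (F : Finset E) (X Y : Finset V) :
    #(G.edgesIn F X) + #(G.edgesIn F Y) ≤ #(G.edgesIn F (X ∪ Y)) + #(G.edgesIn F (X ∩ Y)) := by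
  classical
  rw [← card_union_add_card_inter]
  refine add_le_add (card_le_card ?_) (card_le_card ?_)
  · refine union_subset ?_ ?_
    · exact monotone_filter_right F fun e _ he => sym2_mono subset_union_left he
    · exact monotone_filter_right F fun e _ he => sym2_mono subset_union_right he
  · intro e he
    simp only [mem_inter, mem_edgesIn] at he ⊢
    exact ⟨he.1.1, fun v hv => ⟨he.1.2 v hv, he.2.2 v hv⟩⟩

theorem IsCriticalOn.union (h : G.SparseOn F k l) (hX : G.IsCriticalOn F k l X)
    (hY : G.IsCriticalOn F k l Y) (hXY : (X ∩ Y).Nonempty) : G.IsCriticalOn F k l (X ∪ Y) := by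
  have hinter := h _ hXY
  have hunion := h (X ∪ Y) (hXY.mono (inter_subset_left.trans subset_union_left))
  have hsuper := card_edgesIn_add_card_edgesIn_le (G := G) F X Y
  have hcard : k * #(X ∪ Y) + k * #(X ∩ Y) = k * #X + k * #Y := by
    rw [← mul_add, card_union_add_card_inter, mul_add]
  unfold IsCriticalOn at *
  omega

theorem SparseOn.not_isDiag_ends (h : G.SparseOn F k k) {e : E} (he : e ∈ F) :
    ¬ (G.ends e).IsDiag := by
  intro hdiag
  have hspan : e ∈ G.edgesIn F {(G.ends e).diagElem hdiag} := by
    rw [edgesIn, mem_filter, sym2_singleton, mem_singleton, Sym2.diag_diagElem]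
    exact ⟨he, rfl⟩
  have hpos := card_pos.2 ⟨e, hspan⟩
  have hbound := h {(G.ends e).diagElem hdiag} (singleton_nonempty _)
  rw [card_singleton] at hbound
  omega

theorem SparseOn.card_parallel_add_le (h : G.SparseOn F k l) (v w : V) :
    #{e ∈ F | G.ends e = s(v, w)} + l ≤ k * 2 := by
  have hsub : #{e ∈ F | G.ends e = s(v, w)} ≤ #(G.edgesIn F {v, w}) := by
    refine card_le_card (monotone_filter_right F fun e _ he => ?_)
    simp [he]
  have hbound := h {v, w} (insert_nonempty v {w})
  have hpair : k * #{v, w} ≤ k * 2 := Nat.mul_le_mul_left k card_le_two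
  omega

theorem TightOn.mul_card_le_card_sdiff [Fintype V] [DecidableEq E] (h : G.TightOn F k l)
    (hX : Xᶜ.Nonempty) : k * #X ≤ #(F \ G.edgesIn F Xᶜ) := by
  have hcompl := h.1 _ hX
  have htotal := h.2
  have hsplit := card_sdiff_add_card_eq_card (edgesIn_subset (G := G) (F := F) (X := Xᶜ))
  rw [← card_add_card_compl X, mul_add] at htotal
  omega

theorem TightOn.le_card_incidentEdges_inter [Fintype V] [Nontrivial V] [Fintype E] [DecidableEq E]
    (h : G.TightOn F k l) (v : V) : k ≤ #(F ∩ G.incidentEdges v) := by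
  have hne : ({v}ᶜ : Finset V).Nonempty := by
    obtain ⟨w, hw⟩ := exists_ne v
    exact ⟨w, by simpa using hw⟩
  have hsub : F \ G.edgesIn F {v}ᶜ ⊆ F ∩ G.incidentEdges v := by
    intro e he
    simp only [mem_sdiff, mem_edgesIn, mem_compl, mem_singleton, mem_inter,
      mem_incidentEdges] at he ⊢
    exact ⟨he.1, by_contra fun hv => he.2 ⟨he.1, fun w hw hwv => hv (hwv ▸ hw)⟩⟩
  simpa using (h.mul_card_le_card_sdiff hne).trans (card_le_card hsub)

theorem TightOn.of_erase [Fintype V] [DecidableEq E] {e : E} (he : e ∈ F)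
    (h : G.TightOn (F.erase e) k (l + 1)) : G.TightOn F k l := by
  refine ⟨fun X hX => ?_, ?_⟩
  · have hsub : (G.edgesIn F X).erase e ⊆ G.edgesIn (F.erase e) X := by
      rw [edgesIn, edgesIn, filter_erase]
    have hbound := h.1 X hX
    have hdrop := pred_card_le_card_erase.trans (card_le_card hsub)
    omega
  · have htotal := h.2
    have hF := card_erase_add_one he
    omega

theorem IsCriticalOn.biUnion (h : G.SparseOn F k l) {v : V} {s : Finset ι} (hs : s.Nonempty)
    {Z : ι → Finset V} (hv : ∀ i ∈ s, v ∈ Z i) (hZ : ∀ i ∈ s, G.IsCriticalOn F k l (Z i)) :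
    G.IsCriticalOn F k l (s.biUnion Z) := by
  classical
  induction hs using Nonempty.cons_induction with
  | singleton i => simpa using hZ
  | cons i s hi hs ih =>
    simp only [mem_cons, forall_eq_or_imp] at hv hZ
    obtain ⟨j, hj⟩ := hs
    rw [cons_eq_insert, biUnion_insert]
    exact hZ.1.union h (ih hv.2 hZ.2)
      ⟨v, mem_inter.2 ⟨hv.1, mem_biUnion.2 ⟨j, hj, hv.2 j hj⟩⟩⟩

end Sparsity

/-! ### Tightness of a graph and of its edge-deleted subgraphs -/

section Tight

variable [DecidableEq V] [Fintype E] {G : Multigraph V E} {k l : ℕ}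

theorem iCount_eq_card_edgesIn (X : Finset V) : G.iCount X = #(G.edgesIn univ X) := by
  simp [iCount, edgesIn, ends]

theorem sparse_iff_sparseOn_univ (hlk : l ≤ k) : G.Sparse k l ↔ G.SparseOn univ k l := by
  constructor
  · intro h X hX
    rcases (G.edgesIn univ X).eq_empty_or_nonempty with h0 | ⟨e, he⟩
    · rw [h0, card_empty, zero_add]
      exact hlk.trans (Nat.le_mul_of_pos_right k hX.card_pos)
    · have hspan := h X ⟨e, by simpa [edgesIn, ends] using he⟩
      rw [iCount_eq_card_edgesIn] at hspan
      zify
      linarith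
  · rintro h X ⟨e, he⟩
    have hspan := h X ⟨_, he.1⟩
    rw [iCount_eq_card_edgesIn]
    zify at hspan
    linarith

theorem tight_iff_tightOn_univ [Fintype V] (hlk : l ≤ k) : G.Tight k l ↔ G.TightOn univ k l := by
  refine and_congr (sparse_iff_sparseOn_univ hlk) ?_
  rw [card_univ, eq_sub_iff_add_eq]
  norm_cast

theorem map_edgesIn_deleteEdge [DecidableEq E] (e : E) (X : Finset V) :
    ((G.deleteEdge e).edgesIn univ X).map (Function.Embedding.subtype _) =
      G.edgesIn (univ.erase e) X := by
  ext f
  simp [edgesIn, ends, deleteEdge, and_left_comm]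

theorem tightOn_univ_deleteEdge_iff [Fintype V] [DecidableEq E] (e : E) :
    (G.deleteEdge e).TightOn univ k l ↔ G.TightOn (univ.erase e) k l := by
  have hcount (X : Finset V) :
      #((G.deleteEdge e).edgesIn univ X) = #(G.edgesIn (univ.erase e) X) := by
    rw [← map_edgesIn_deleteEdge, card_map]
  have hcard : #(univ : Finset {f // f ≠ e}) = #(univ.erase e) := by
    simpa only [edgesIn_univ] using hcount univ
  simp only [TightOn, SparseOn, hcount, hcard]

theorem isP21_iff [Fintype V] [DecidableEq E] :
    G.IsP21 ↔ ∃ e, G.TightOn (univ.erase e) 2 2 := by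
  have hdelete (e : E) : (G.deleteEdge e).Tight 2 2 ↔ G.TightOn (univ.erase e) 2 2 :=
    (tight_iff_tightOn_univ le_rfl).trans (tightOn_univ_deleteEdge_iff e)
  have hfull : G.Tight 2 1 ↔ G.TightOn univ 2 1 :=
    tight_iff_tightOn_univ (k := 2) (l := 1) one_le_two
  simp only [IsP21, hdelete, hfull, and_iff_right_iff_imp, forall_exists_index]
  exact fun e he => he.of_erase (mem_univ e)

theorem isP21_sum_iff {W : Type} [Fintype W] [DecidableEq W] [DecidableEq E] [Fintype ι]
    [DecidableEq ι] {H : Multigraph W (E ⊕ ι)} :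
    H.IsP21 ↔ (∃ e, H.TightOn ((univ.erase e).disjSum univ) 2 2) ∨
      ∃ i, H.TightOn (univ.disjSum (univ.erase i)) 2 2 := by
  have hold (e : E) :
      univ.erase (Sum.inl e : E ⊕ ι) = (univ.erase e).disjSum univ := by ext (f | f) <;> simp
  have hnew (i : ι) :
      univ.erase (Sum.inr i : E ⊕ ι) = univ.disjSum (univ.erase i) := by ext (f | f) <;> simp
  simp only [isP21_iff, Sum.exists, hold, hnew]

end Tight

/-! ### Vertex additions and vertex splits -/

section Extension

variable [DecidableEq V] {G : Multigraph V E} {F : Finset E} {R : Finset ι} {k l : ℕ}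
  {t : ι → V} {u w : V}

theorem edgesIn_attachVertex_map_some (Y : Finset V) :
    (G.attachVertex t).edgesIn (F.disjSum R) (Y.map Function.Embedding.some) =
      (G.edgesIn F Y).disjSum ∅ := by
  ext (e | i) <;> simp [edgesIn, ends, attachVertex]

theorem edgesIn_attachVertex_insertNone (Y : Finset V) :
    (G.attachVertex t).edgesIn (F.disjSum R) (insertNone Y) =
      (G.edgesIn F Y).disjSum {i ∈ R | t i ∈ Y} := by
  ext (e | i) <;> simp [edgesIn, ends, attachVertex]

theorem sparseOn_attachVertex_iff : (G.attachVertex t).SparseOn (F.disjSum R) k l ↔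
    G.SparseOn F k l ∧ ∀ Y, #(G.edgesIn F Y) + #{i ∈ R | t i ∈ Y} + l ≤ k * (#Y + 1) := by
  constructor
  · refine fun h => ⟨fun Y hY => ?_, fun Y => ?_⟩
    · simpa [edgesIn_attachVertex_map_some] using h (Y.map Function.Embedding.some) (hY.map)
    · simpa [edgesIn_attachVertex_insertNone] using h (insertNone Y) insertNone_nonempty
  · rintro ⟨hold, hnew⟩ X hX
    by_cases hnone : none ∈ X
    · have hX' : insertNone (eraseNone X) = X := by
        rw [insertNone_eraseNone, insert_eq_of_mem hnone]
      rw [← hX', edgesIn_attachVertex_insertNone, card_disjSum, card_insertNone]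
      exact hnew _
    · have hX' : (eraseNone X).map Function.Embedding.some = X := by
        rw [map_some_eraseNone, erase_eq_of_notMem hnone]
      rw [← hX', map_nonempty] at hX
      rw [← hX', edgesIn_attachVertex_map_some, disjSum_empty, card_map, card_map]
      exact hold _ hX

theorem tightOn_attachVertex_iff [Fintype V] :
    (G.attachVertex t).TightOn (F.disjSum R) k l ↔
      (G.SparseOn F k l ∧ ∀ Y, #(G.edgesIn F Y) + #{i ∈ R | t i ∈ Y} + l ≤ k * (#Y + 1)) ∧
        #F + #R + l = k * (Fintype.card V + 1) := by
  rw [TightOn, sparseOn_attachVertex_iff, card_disjSum, Fintype.card_option]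

theorem SparseOn.card_edgesIn_add_le (h : G.SparseOn F k l) (hlk : l ≤ k) (Y : Finset V)
    (hR : #{i ∈ R | t i ∈ Y} ≤ k) :
    #(G.edgesIn F Y) + #{i ∈ R | t i ∈ Y} + l ≤ k * (#Y + 1) := by
  rcases Y.eq_empty_or_nonempty with rfl | hY
  · simpa [edgesIn_empty] using hlk
  · have hbound := h Y hY
    rw [mul_add, mul_one]
    omega

theorem tightOn_attachVertex_iff_of_card_eq [Fintype V] (hR : #R = k) (hlk : l ≤ k) :
    (G.attachVertex t).TightOn (F.disjSum R) k l ↔ G.TightOn F k l := by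
  rw [tightOn_attachVertex_iff, hR, add_right_comm, mul_add, mul_one, add_left_inj]
  exact and_congr_left fun _ => ⟨And.left, fun h => ⟨h, fun Y =>
    h.card_edgesIn_add_le hlk Y ((card_filter_le _ _).trans hR.le)⟩⟩

theorem edgesIn_addEdge {S : Finset Unit} (Y : Finset V) :
    (G.addEdge u w).edgesIn (F.disjSum S) Y =
      (G.edgesIn F Y).disjSum (if u ∈ Y ∧ w ∈ Y then S else ∅) := by
  split_ifs with huw <;> ext (e | e) <;> simp [edgesIn, ends, addEdge, huw]

theorem sparseOn_addEdge_iff : (G.addEdge u w).SparseOn (F.disjSum univ) k l ↔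
    G.SparseOn F k l ∧ ∀ Y, u ∈ Y → w ∈ Y → #(G.edgesIn F Y) + 1 + l ≤ k * #Y := by
  simp only [SparseOn, edgesIn_addEdge, card_disjSum]
  constructor
  · refine fun h => ⟨fun Y hY => ?_, fun Y hu hw => ?_⟩
    · have hbound := h Y hY
      omega
    · simpa only [hu, hw, and_self, if_true, card_univ, Fintype.card_unit] using h Y ⟨u, hu⟩
  · rintro ⟨hold, hnew⟩ Y hY
    split_ifs with huw
    · exact hnew Y huw.1 huw.2
    · exact hold Y hY

theorem tightOn_addEdge_iff [Fintype V] : (G.addEdge u w).TightOn (F.disjSum univ) k l ↔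
    (G.SparseOn F k l ∧ ∀ Y, u ∈ Y → w ∈ Y → #(G.edgesIn F Y) + 1 + l ≤ k * #Y) ∧
      #F + 1 + l = k * Fintype.card V := by
  rw [TightOn, sparseOn_addEdge_iff, card_disjSum, card_univ, Fintype.card_unit]

theorem tightOn_addEdge_disjSum_empty_iff [Fintype V] :
    (G.addEdge u w).TightOn (F.disjSum ∅) k l ↔ G.TightOn F k l := by
  simp only [TightOn, SparseOn, edgesIn_addEdge, ite_self, card_disjSum, card_empty, add_zero]

variable [Fintype V] [Fintype ι]

theorem TightOn.attachVertex_of_addEdge (h : (G.addEdge u w).TightOn (F.disjSum univ) k l)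
    (hlk : l ≤ k) (hι : Fintype.card ι = k + 1) (hu : u ∈ Set.range t) (hw : w ∈ Set.range t) :
    (G.attachVertex t).TightOn (F.disjSum univ) k l := by
  obtain ⟨⟨hsparse, huw⟩, hcard⟩ := tightOn_addEdge_iff.1 h
  refine tightOn_attachVertex_iff.2 ⟨⟨hsparse, fun Y => ?_⟩, ?_⟩
  · have hle : #{i | t i ∈ Y} ≤ k + 1 := (card_filter_le _ _).trans (card_univ.trans hι).le
    rcases hle.eq_or_lt with heq | hlt
    · have hmem (i : ι) : t i ∈ Y :=
        card_filter_eq_iff.1 (heq.trans (hι.symm.trans card_univ.symm)) i (mem_univ i)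
      obtain ⟨⟨i, rfl⟩, j, rfl⟩ := And.intro hu hw
      have hbound := huw Y (hmem i) (hmem j)
      rw [mul_add, mul_one]
      omega
    · exact hsparse.card_edgesIn_add_le hlk Y (Nat.lt_succ_iff.1 hlt)
  · rw [card_univ, hι, mul_add, mul_one]
    omega

/-- If no split edge at `t i` could be restored, there would be critical sets through `t i`
covering all neighbours of the new vertex. Their union is critical, so that adding the new vertex
with its `k + 1` edges violates sparsity. -/
theorem TightOn.exists_addEdge (h : (G.attachVertex t).TightOn (F.disjSum univ) k l)
    (hι : Fintype.card ι = k + 1) {i i' : ι} (hi' : t i' ≠ t i) :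
    ∃ j, t j ≠ t i ∧ (G.addEdge (t i) (t j)).TightOn (F.disjSum univ) k l := by
  classical
  obtain ⟨⟨hsparse, hnew⟩, hcard⟩ := tightOn_attachVertex_iff.1 h
  rw [card_univ, hι, mul_add, mul_one] at hcard
  by_contra! hnot
  have hcrit_of_ne (j : ι) (hj : t j ≠ t i) :
      ∃ Z, t i ∈ Z ∧ t j ∈ Z ∧ G.IsCriticalOn F k l Z := by
    by_contra! hZ
    refine hnot j hj (tightOn_addEdge_iff.2 ⟨⟨hsparse, fun Z hi hj => ?_⟩, by omega⟩)
    have hne : #(G.edgesIn F Z) + l ≠ k * #Z := hZ Z hi hj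
    have hle := hsparse Z ⟨_, hi⟩
    omega
  have hcrit (j : ι) : ∃ Z, t i ∈ Z ∧ t j ∈ Z ∧ G.IsCriticalOn F k l Z := by
    by_cases hj : t j = t i
    · obtain ⟨Z, hi, -, hZ⟩ := hcrit_of_ne i' hi'
      exact ⟨Z, hi, hj ▸ hi, hZ⟩
    · exact hcrit_of_ne j hj
  choose Z hiZ hjZ hZ using hcrit
  have hunion : G.IsCriticalOn F k l (univ.biUnion Z) :=
    .biUnion hsparse ⟨i, mem_univ i⟩ (fun j _ => hiZ j) fun j _ => hZ j
  have hall : #{j | t j ∈ univ.biUnion Z} = k + 1 := by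
    rw [filter_true_of_mem fun j _ => mem_biUnion.2 ⟨j, mem_univ j, hjZ j⟩, card_univ, hι]
  have hbound := hnew (univ.biUnion Z)
  rw [hall, mul_add, mul_one] at hbound
  unfold IsCriticalOn at hunion
  omega

variable [Fintype E] [DecidableEq ι]

theorem tightOn_attachVertex_erase_iff (hι : Fintype.card ι = 3) (i : ι) :
    (G.attachVertex t).TightOn (univ.disjSum (univ.erase i)) 2 2 ↔ G.TightOn univ 2 2 :=
  tightOn_attachVertex_iff_of_card_eq
    (by rw [card_erase_of_mem (mem_univ i), card_univ, hι]) le_rfl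

variable [DecidableEq E]

theorem isP21_attachVertex_iff (hι : Fintype.card ι = 2) :
    (G.attachVertex t).IsP21 ↔ G.IsP21 := by
  have hnew (i : ι) : ¬ (G.attachVertex t).TightOn (univ.disjSum (univ.erase i)) 2 2 := by
    intro h
    obtain ⟨⟨hsparse, -⟩, hcard⟩ := tightOn_attachVertex_iff.1 h
    have hbound := hsparse univ ⟨t i, mem_univ _⟩
    rw [edgesIn_univ, card_univ (α := V)] at hbound
    rw [card_erase_of_mem (mem_univ i), card_univ (α := ι), hι] at hcard
    omega
  rw [isP21_sum_iff, isP21_iff, or_iff_left (not_exists.2 hnew)]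
  exact exists_congr fun e => tightOn_attachVertex_iff_of_card_eq (card_univ.trans hι) le_rfl

theorem isP21_addEdge_iff : (G.addEdge u w).IsP21 ↔
    (∃ e, (G.addEdge u w).TightOn ((univ.erase e).disjSum univ) 2 2) ∨ G.TightOn univ 2 2 := by
  rw [isP21_sum_iff]
  refine or_congr_right (Unique.exists_iff.trans ?_)
  exact tightOn_addEdge_disjSum_empty_iff

theorem IsP21.attachVertex_of_addEdge (h : (G.addEdge u w).IsP21) (hι : Fintype.card ι = 3)
    (hu : u ∈ Set.range t) (hw : w ∈ Set.range t) : (G.attachVertex t).IsP21 := by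
  rw [isP21_sum_iff]
  rcases isP21_addEdge_iff.1 h with ⟨e, he⟩ | htight
  · exact .inl ⟨e, he.attachVertex_of_addEdge le_rfl hι hu hw⟩
  · obtain ⟨i, -⟩ := hu
    exact .inr ⟨i, (tightOn_attachVertex_erase_iff hι i).2 htight⟩

theorem IsP21.exists_addEdge (h : (G.attachVertex t).IsP21) (hι : Fintype.card ι = 3)
    {i i' : ι} (hi' : t i' ≠ t i) : ∃ j, t j ≠ t i ∧ (G.addEdge (t i) (t j)).IsP21 := by
  simp only [isP21_addEdge_iff]
  rcases isP21_sum_iff.1 h with ⟨e, he⟩ | ⟨i₀, hi₀⟩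
  · obtain ⟨j, hj, htight⟩ := he.exists_addEdge hι hi'
    exact ⟨j, hj, .inl ⟨e, htight⟩⟩
  · exact ⟨i', hi', .inr ((tightOn_attachVertex_erase_iff hι i₀).1 hi₀)⟩

end Extension

section Transport

variable {V' E' : Type} [DecidableEq V] [DecidableEq V'] {G : Multigraph V E}
  {H : Multigraph V' E'} {F : Finset E} {k l : ℕ} {φ : V ≃ V'} {ψ : E ≃ E'}

theorem edgesIn_map (h : ∀ e, H.ends (ψ e) = (G.ends e).map φ) (X : Finset V') :
    H.edgesIn (F.map ψ.toEmbedding) X =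
      (G.edgesIn F (X.map φ.symm.toEmbedding)).map ψ.toEmbedding := by
  ext f
  obtain ⟨e, rfl⟩ := ψ.surjective f
  simp [mem_edgesIn, h]

theorem TightOn.map [Fintype V] [Fintype V'] (h : ∀ e, H.ends (ψ e) = (G.ends e).map φ)
    (hG : G.TightOn F k l) : H.TightOn (F.map ψ.toEmbedding) k l := by
  refine ⟨fun X hX => ?_, ?_⟩
  · simpa [edgesIn_map h] using hG.1 (X.map φ.symm.toEmbedding) hX.map
  · rw [card_map, ← Fintype.card_congr φ, hG.2]

end Transport

end Multigraph

/-! ### Isomorphisms and moves -/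

theorem bmgIso_iff {A B : BMG} : BMGIso A B ↔
    ∃ (φ : A.V ≃ B.V) (ψ : A.E ≃ B.E), ∀ e, B.G.ends (ψ e) = (A.G.ends e).map φ := by
  simp only [BMGIso, Multigraph.ends, Sym2.map_mk, Sym2.eq_iff]

theorem BMGIso.symm {A B : BMG} (h : BMGIso A B) : BMGIso B A := by
  obtain ⟨φ, ψ, h⟩ := bmgIso_iff.1 h
  refine bmgIso_iff.2 ⟨φ.symm, ψ.symm, fun e => ?_⟩
  obtain ⟨e, rfl⟩ := ψ.surjective e
  simp [h, Sym2.map_map]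

theorem BMGIso.trans {A B C : BMG} (hAB : BMGIso A B) (hBC : BMGIso B C) : BMGIso A C := by
  obtain ⟨φ, ψ, hAB⟩ := bmgIso_iff.1 hAB
  obtain ⟨φ', ψ', hBC⟩ := bmgIso_iff.1 hBC
  exact bmgIso_iff.2 ⟨φ.trans φ', ψ.trans ψ', fun e => by simp [hAB, hBC, Sym2.map_map]⟩

theorem BMGIso.isP21 {A B : BMG} (h : BMGIso A B) (hA : A.G.IsP21) : B.G.IsP21 := by
  obtain ⟨φ, ψ, h⟩ := bmgIso_iff.1 h
  obtain ⟨e, he⟩ := Multigraph.isP21_iff.1 hA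
  have hB := he.map h
  rw [Finset.map_erase, Finset.map_univ_equiv] at hB
  exact Multigraph.isP21_iff.2 ⟨_, hB⟩

namespace Multigraph

section Iso

variable {V E ι : Type} [Fintype V] [Fintype E] [Fintype ι] [DecidableEq V] [DecidableEq E]
  [DecidableEq ι]

theorem bmgIso_addEdge_deleteEdge {G : Multigraph V E} {e : E} {u w : V}
    (he : G.ends e = s(u, w)) : BMGIso ((G.deleteEdge e).addEdge u w).toBMG G.toBMG := by
  refine bmgIso_iff.2 ⟨.refl V, Equiv.subtypeNeSumPUnit e, ?_⟩
  rintro (f | _)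
  · simp [ends, addEdge, deleteEdge]
  · simpa [ends, addEdge] using he

theorem bmgIso_attachVertex_deleteEdge_addEdge (G : Multigraph V E) (u w : V) (t : ι → V) :
    BMGIso (G.attachVertex t).toBMG
      (((G.addEdge u w).deleteEdge (Sum.inr ())).attachVertex t).toBMG := by
  have hbij : Function.Bijective
      fun e : E => (⟨.inl e, Sum.inl_ne_inr⟩ : {f : E ⊕ Unit // f ≠ .inr ()}) := by
    refine ⟨fun e f hef => Sum.inl_injective (congrArg Subtype.val hef), ?_⟩
    rintro ⟨e | _, he⟩
    · exact ⟨e, rfl⟩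
    · exact absurd rfl he
  refine bmgIso_iff.2 ⟨.refl _, (Equiv.ofBijective _ hbij).sumCongr (.refl ι), ?_⟩
  rintro (e | i) <;> simp [ends, attachVertex, addEdge, deleteEdge]

theorem bmgIso_addV2 (A : BMG) (t : ι → A.V) (σ : Fin 2 ≃ ι) :
    BMGIso (A.addV2 (t (σ 0)) (t (σ 1))) (A.G.attachVertex t).toBMG := by
  refine ⟨.refl _, (Equiv.refl A.E).sumCongr σ, ?_⟩
  rintro (e | i)
  · exact .inl ⟨rfl, rfl⟩
  · fin_cases i <;> exact .inl ⟨rfl, rfl⟩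

theorem bmgIso_split (A : BMG) (e₀ : A.E) (t : ι → A.V) (σ : Fin 3 ≃ ι) :
    BMGIso (A.split e₀ (t (σ 0)) (t (σ 1)) (t (σ 2)))
      ((A.G.deleteEdge e₀).attachVertex t).toBMG := by
  refine ⟨.refl _, (Equiv.refl {e // e ≠ e₀}).sumCongr σ, ?_⟩
  rintro (e | i)
  · exact .inl ⟨rfl, rfl⟩
  · fin_cases i <;> exact .inl ⟨rfl, rfl⟩

end Iso

end Multigraph

theorem BMG.bmgIso_split_swap (A : BMG) (e₀ : A.E) (v₁ v₂ v₃ : A.V) :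
    BMGIso (A.split e₀ v₁ v₂ v₃) (A.split e₀ v₂ v₁ v₃) :=
  (Multigraph.bmgIso_split A e₀ ![v₂, v₁, v₃] (Equiv.swap 0 1)).trans
    (Multigraph.bmgIso_split A e₀ ![v₂, v₁, v₃] (.refl _)).symm

theorem mStep_iff {A B : BMG} : MStep A B ↔
    (∃ v₁ v₂, BMGIso (A.addV2 v₁ v₂) B) ∨
      ∃ e₀ v₁ v₂ v₃, A.G.ends e₀ = s(v₁, v₂) ∧ v₁ ≠ v₂ ∧ BMGIso (A.split e₀ v₁ v₂ v₃) B := by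
  constructor
  · rintro (⟨v₁, v₂, -, h⟩ | ⟨v, h⟩ | ⟨e₀, v₃, hne, -, -, h⟩ | ⟨e₀, v₁, v₂, hne, he₀, h⟩)
    · exact .inl ⟨v₁, v₂, h⟩
    · exact .inl ⟨v, v, h⟩
    · exact .inr ⟨e₀, _, _, v₃, rfl, hne, h⟩
    · exact .inr ⟨e₀, v₁, v₂, v₂, Sym2.eq_iff.2 he₀, hne, h⟩
  · rintro (⟨v₁, v₂, h⟩ | ⟨e₀, v₁, v₂, v₃, he₀, hne, h⟩)
    · by_cases hv : v₁ = v₂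
      · exact .inr (.inl ⟨v₂, hv ▸ h⟩)
      · exact .inl ⟨v₁, v₂, hv, h⟩
    have hswap := (A.bmgIso_split_swap e₀ v₂ v₁ v₃).trans h
    by_cases h₁ : v₃ = v₁
    · subst h₁
      exact .inr (.inr (.inr ⟨e₀, v₂, v₃, hne.symm, (Sym2.eq_iff.1 he₀).symm, hswap⟩))
    by_cases h₂ : v₃ = v₂
    · subst h₂
      exact .inr (.inr (.inr ⟨e₀, v₁, v₃, hne, Sym2.eq_iff.1 he₀, h⟩))
    rcases Sym2.eq_iff.1 he₀ with ⟨rfl, rfl⟩ | ⟨rfl, rfl⟩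
    · exact .inr (.inr (.inl ⟨e₀, v₃, hne, h₁, h₂, h⟩))
    · exact .inr (.inr (.inl ⟨e₀, v₃, hne.symm, h₂, h₁, hswap⟩))

theorem MStep.trans_bmgIso {A B C : BMG} (hAB : MStep A B) (hBC : BMGIso B C) : MStep A C := by
  rw [mStep_iff] at hAB ⊢
  rcases hAB with ⟨v₁, v₂, h⟩ | ⟨e₀, v₁, v₂, v₃, he₀, hne, h⟩
  · exact .inl ⟨v₁, v₂, h.trans hBC⟩
  · exact .inr ⟨e₀, v₁, v₂, v₃, he₀, hne, h.trans hBC⟩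

theorem MStep.isP21 {A B : BMG} (h : MStep A B) (hA : A.G.IsP21) : B.G.IsP21 := by
  rcases mStep_iff.1 h with ⟨v₁, v₂, h⟩ | ⟨e₀, v₁, v₂, v₃, he₀, -, h⟩
  · refine ((Multigraph.bmgIso_addV2 A ![v₁, v₂] (.refl _)).symm.trans h).isP21 ?_
    exact (Multigraph.isP21_attachVertex_iff (Fintype.card_fin 2)).2 hA
  · refine ((Multigraph.bmgIso_split A e₀ ![v₁, v₂, v₃] (.refl _)).symm.trans h).isP21 ?_
    have haddEdge := (Multigraph.bmgIso_addEdge_deleteEdge he₀).symm.isP21 hA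
    exact haddEdge.attachVertex_of_addEdge (Fintype.card_fin 3) ⟨0, rfl⟩ ⟨1, rfl⟩

theorem mStep_attachVertex {ι : Type} [Fintype ι] [DecidableEq ι] {A : BMG} (t : ι → A.V)
    (hι : Fintype.card ι = 2) : MStep A (A.G.attachVertex t).toBMG :=
  mStep_iff.2 (.inl ⟨_, _, Multigraph.bmgIso_addV2 A t (Fintype.equivFinOfCardEq hι).symm⟩)

theorem mStep_attachVertex_deleteEdge {ι : Type} [Fintype ι] [DecidableEq ι] {A : BMG}
    {t : ι → A.V} {e₀ : A.E} {i j : ι} (hι : Fintype.card ι = 3)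
    (he₀ : A.G.ends e₀ = s(t i, t j)) (hij : t i ≠ t j) :
    MStep A ((A.G.deleteEdge e₀).attachVertex t).toBMG := by
  obtain ⟨σ, rfl, rfl⟩ : ∃ σ : Fin 3 ≃ ι, σ 0 = i ∧ σ 1 = j := by
    have h2 : MulAction.IsMultiplyPretransitive (Equiv.Perm ι) ι 2 :=
      Equiv.Perm.isMultiplyPretransitive ι 2
    have τ := (Fintype.equivFinOfCardEq hι).symm
    obtain ⟨ρ, hi, hj⟩ := MulAction.is_two_pretransitive_iff.1 h2
      (τ.injective.ne (show (0 : Fin 3) ≠ 1 by decide)) (ne_of_apply_ne t hij)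
    exact ⟨τ.trans ρ, hi, hj⟩
  exact mStep_iff.2 (.inr ⟨e₀, _, _, _, he₀, hij, Multigraph.bmgIso_split A e₀ t σ⟩)

/-! ### Vertices of small degree -/

open Finset in
theorem exists_lt_or_exists_ne_and_eq {α : Type*} [Fintype α] {d : α → ℕ} {m : ℕ}
    (h : ∑ a, d a + 2 ≤ (m + 1) * Fintype.card α) :
    (∃ a, d a < m) ∨ ∃ a b, a ≠ b ∧ d a = m ∧ d b = m := by
  by_contra! hd
  obtain ⟨hle, hpair⟩ := hd
  have hfew : #{a | d a = m} ≤ 1 := card_le_one.2 fun a ha b hb =>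
    by_contra fun hab => hpair a b hab (mem_filter.1 ha).2 (mem_filter.1 hb).2
  have hsum : Fintype.card α * (m + 1) ≤ ∑ a, (d a + if d a = m then 1 else 0) := by
    refine card_nsmul_le_sum univ _ (m + 1) fun a _ => ?_
    have ha := hle a
    split_ifs <;> omega
  rw [sum_add_distrib, ← card_filter, mul_comm] at hsum
  omega

namespace Multigraph

open Finset

variable {V E : Type} [Fintype E] [DecidableEq V] {G : Multigraph V E} {u v w : V} {e : E}

theorem degree_eq (G : Multigraph V E) (v : V) :
    G.degree v = #(G.incidentEdges v) + #{e | G.ends e = s(v, v)} := by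
  classical
  rw [degree, ← card_union_add_card_inter, ← filter_or, ← filter_and]
  simp only [incidentEdges, ends, Sym2.mem_iff, Sym2.eq_iff, or_self, eq_comm (a := v)]

theorem sum_degree [Fintype V] (G : Multigraph V E) : ∑ v, G.degree v = 2 * Fintype.card E := by
  have hfiber (f : E → V) : ∑ v, #{e | f e = v} = Fintype.card E :=
    (card_eq_sum_card_fiberwise fun e _ => mem_univ (f e)).symm
  simp only [degree, sum_add_distrib, hfiber, two_mul]

theorem degree_eq_card_incidentEdges (h : ∀ e, G.ends e ≠ s(v, v)) :
    G.degree v = #(G.incidentEdges v) := by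
  rw [degree_eq, filter_false_of_mem fun e _ => h e, card_empty, add_zero]

theorem TightOn.ends_ne_of_degree_le_three [Fintype V] [Nontrivial V] [DecidableEq E]
    (h : G.TightOn (univ.erase e) 2 2) (hv : G.degree v ≤ 3) (f : E) : G.ends f ≠ s(v, v) := by
  intro hf
  obtain rfl : f = e := by
    by_contra hfe
    exact h.1.not_isDiag_ends (mem_erase.2 ⟨hfe, mem_univ f⟩) (hf ▸ rfl)
  have hother := h.le_card_incidentEdges_inter v
  have hmem : f ∈ G.incidentEdges v := by simp [mem_incidentEdges, hf]
  have hloop : 0 < #{e | G.ends e = s(v, v)} := card_pos.2 ⟨f, by simpa using hf⟩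
  rw [erase_inter, univ_inter, card_erase_of_mem hmem] at hother
  rw [degree_eq] at hv
  omega

theorem TightOn.ends_eq_of_incidentEdges [DecidableEq E] [Fintype V]
    (h : G.TightOn (univ.erase e) 2 2) (hv : #(G.incidentEdges v) = 3)
    (hw : ∀ f ∈ G.incidentEdges v, G.ends f = s(v, w)) : G.ends e = s(v, w) := by
  by_contra he
  have hsub : G.incidentEdges v ⊆ {f ∈ univ.erase e | G.ends f = s(v, w)} := fun f hf =>
    mem_filter.2 ⟨mem_erase.2 ⟨fun hfe => he (hfe ▸ hw f hf), mem_univ f⟩, hw f hf⟩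
  have hle := card_le_card hsub
  have hpar := h.1.card_parallel_add_le v w
  omega

theorem TightOn.isK23 [DecidableEq E] [Fintype V] (h : G.TightOn (univ.erase e) 2 2)
    (huv : u ≠ v) (hv : #(G.incidentEdges v) = 3) (he : e ∈ G.incidentEdges v)
    (hends : ∀ f, f ∈ G.incidentEdges u ∨ f ∈ G.incidentEdges v → G.ends f = s(u, v)) :
    G.IsK23 := by
  have hpair : univ.erase e \ G.edgesIn (univ.erase e) {u, v}ᶜ ⊆ (G.incidentEdges v).erase e := by
    intro f hf
    simp only [mem_sdiff, mem_edgesIn, mem_erase, mem_univ, and_true, mem_compl, mem_insert,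
      mem_singleton, not_and, not_forall, not_not] at hf
    obtain ⟨x, hx, rfl | rfl⟩ := hf.2 hf.1
    · rw [mem_erase, mem_incidentEdges, hends f (.inl (mem_incidentEdges.2 hx))]
      exact ⟨hf.1, Sym2.mem_mk_right _ _⟩
    · exact mem_erase.2 ⟨hf.1, mem_incidentEdges.2 hx⟩
  have hVpair : ({u, v} : Finset V) = univ := by
    by_contra hne
    have hcompl := nonempty_iff_ne_empty.2 (mt (compl_eq_empty_iff _).1 hne)
    have hle := (h.mul_card_le_card_sdiff hcompl).trans (card_le_card hpair)
    rw [card_pair huv, card_erase_of_mem he] at hle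
    omega
  have hcardV : Fintype.card V = 2 := by rw [← card_univ, ← hVpair, card_pair huv]
  have hcardE : Fintype.card E = 3 := by
    have htotal := h.2
    rw [card_erase_of_mem (mem_univ e), card_univ, hcardV] at htotal
    omega
  have hall : G.incidentEdges v = univ := (card_eq_iff_eq_univ _).1 (hv.trans hcardE.symm)
  refine ⟨u, v, huv, fun x => by simpa using hVpair.ge (mem_univ x), hcardE, fun f => ?_⟩
  exact Sym2.eq_iff.1 (hends f (.inr (hall ▸ mem_univ f)))

theorem TightOn.exists_degree_eq [Fintype V] [Nontrivial V] [DecidableEq E]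
    (h : G.TightOn (univ.erase e) 2 2) :
    (∃ v, G.degree v = 2) ∨ ∃ u v, u ≠ v ∧ G.degree u = 3 ∧ G.degree v = 3 := by
  refine (exists_lt_or_exists_ne_and_eq (d := G.degree) (m := 3) ?_).imp_left ?_
  · have hE := h.2
    rw [card_erase_of_mem (mem_univ e), card_univ] at hE
    rw [sum_degree]
    have hV := Fintype.one_lt_card (α := V)
    omega
  · refine fun ⟨v, hv⟩ => ⟨v, (Nat.le_of_lt_succ hv).antisymm ?_⟩
    rw [degree_eq]
    exact (h.le_card_incidentEdges_inter v).trans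
      ((card_le_card inter_subset_right).trans (Nat.le_add_right _ _))

end Multigraph

/-! ### Reduction -/

/-- `B` arises by a move from a strictly smaller `P(2,1)`-graph. -/
def BMG.IsReducible (B : BMG) : Prop :=
  ∃ A : BMG, A.G.IsP21 ∧ MStep A B ∧ Fintype.card A.V < Fintype.card B.V

namespace Multigraph

open Finset

variable {V E : Type} [Fintype V] [Fintype E] [DecidableEq V] [DecidableEq E]
  {G : Multigraph V E} {v : V}

theorem exists_bmgIso_attachVertex_deleteVertex (hloop : ∀ e, G.ends e ≠ s(v, v)) :
    ∃ t : {e // e ∈ G.incidentEdges v} → {w // w ≠ v},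
      (∀ e : {e // e ∈ G.incidentEdges v}, G.ends e = s(v, (t e).1)) ∧
        BMGIso ((G.deleteVertex v).attachVertex t).toBMG G.toBMG := by
  have hother (e : {e // e ∈ G.incidentEdges v}) : ∃ w : {w // w ≠ v}, G.ends e = s(v, w.1) := by
    obtain ⟨w, hw⟩ := mem_incidentEdges.1 e.2
    exact ⟨⟨w, fun hwv => hloop e (by rw [hw, hwv])⟩, hw⟩
  choose t ht using hother
  have hincident (e : E) : e ∈ G.incidentEdges v ↔ ¬ (G.src e ≠ v ∧ G.dst e ≠ v) := by
    rw [mem_incidentEdges, ends, Sym2.mem_iff, eq_comm, eq_comm (a := v)]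
    tauto
  refine ⟨t, ht, bmgIso_iff.2 ⟨Equiv.optionSubtypeNe v,
    (Equiv.sumCongr (.refl _) (Equiv.subtypeEquivRight hincident)).trans (Equiv.sumCompl _), ?_⟩⟩
  rintro (e | e)
  · simp [ends, attachVertex, deleteVertex]
  · simpa [ends, attachVertex] using ht e

theorem IsP21.isReducible_of_card_eq_two (h : G.IsP21) (hloop : ∀ e, G.ends e ≠ s(v, v))
    (hv : #(G.incidentEdges v) = 2) : G.toBMG.IsReducible := by
  obtain ⟨t, -, hiso⟩ := exists_bmgIso_attachVertex_deleteVertex hloop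
  have hcard : Fintype.card {e // e ∈ G.incidentEdges v} = 2 := (Fintype.card_coe _).trans hv
  exact ⟨(G.deleteVertex v).toBMG, (isP21_attachVertex_iff hcard).1 (hiso.symm.isP21 h),
    (mStep_attachVertex t hcard).trans_bmgIso hiso, Fintype.card_subtype_lt (x := v) (by simp)⟩

theorem IsP21.isReducible_or_exists_of_card_eq_three (h : G.IsP21)
    (hloop : ∀ e, G.ends e ≠ s(v, v)) (hv : #(G.incidentEdges v) = 3) :
    G.toBMG.IsReducible ∨ ∃ w, ∀ e ∈ G.incidentEdges v, G.ends e = s(v, w) := by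
  obtain ⟨t, ht, hiso⟩ := exists_bmgIso_attachVertex_deleteVertex hloop
  have hcard : Fintype.card {e // e ∈ G.incidentEdges v} = 3 := (Fintype.card_coe _).trans hv
  obtain ⟨e₀, he₀⟩ := card_pos.1 (hv ▸ three_pos)
  let i : {e // e ∈ G.incidentEdges v} := ⟨e₀, he₀⟩
  by_cases hconst : ∃ i', t i' ≠ t i
  · left
    obtain ⟨i', hi'⟩ := hconst
    obtain ⟨j, hj, hP⟩ := IsP21.exists_addEdge (hiso.symm.isP21 h) hcard hi'
    let A := ((G.deleteVertex v).addEdge (t i) (t j)).toBMG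
    have hstep : MStep A ((A.G.deleteEdge (.inr ())).attachVertex t).toBMG :=
      mStep_attachVertex_deleteEdge hcard rfl hj.symm
    have hrestore := bmgIso_attachVertex_deleteEdge_addEdge (G.deleteVertex v) (t i) (t j) t
    exact ⟨A, hP, hstep.trans_bmgIso (hrestore.symm.trans hiso),
      Fintype.card_subtype_lt (x := v) (by simp)⟩
  · push Not at hconst
    exact .inr ⟨t i, fun e he => (ht ⟨e, he⟩).trans (by rw [hconst])⟩

theorem IsP21.isReducible_or_isK23 [Nontrivial V] (h : G.IsP21) :
    G.toBMG.IsReducible ∨ G.IsK23 := by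
  obtain ⟨e, he⟩ := isP21_iff.1 h
  have hloopless {x : V} (hx : G.degree x ≤ 3) := he.ends_ne_of_degree_le_three hx
  rcases he.exists_degree_eq with ⟨v, hv⟩ | ⟨u, v, huv, hu, hv⟩
  · have hloop := hloopless (hv.trans_le (Nat.le_succ 2))
    rw [degree_eq_card_incidentEdges hloop] at hv
    exact .inl (h.isReducible_of_card_eq_two hloop hv)
  have hloop_u := hloopless hu.le
  have hloop_v := hloopless hv.le
  rw [degree_eq_card_incidentEdges hloop_u] at hu
  rw [degree_eq_card_incidentEdges hloop_v] at hv
  rcases h.isReducible_or_exists_of_card_eq_three hloop_u hu with hred | ⟨w, hw⟩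
  · exact .inl hred
  rcases h.isReducible_or_exists_of_card_eq_three hloop_v hv with hred | ⟨w', hw'⟩
  · exact .inl hred
  have hew := he.ends_eq_of_incidentEdges hu hw
  have hew' := he.ends_eq_of_incidentEdges hv hw'
  obtain ⟨rfl, rfl⟩ : u = w' ∧ w = v := by
    simpa [huv] using hew.symm.trans hew'
  refine .inr (he.isK23 huv hv (by simp [mem_incidentEdges, hew]) ?_)
  rintro f (hf | hf)
  · exact hw f hf
  · exact (hw' f hf).trans Sym2.eq_swap

theorem IsK23.bmgIso (h : G.IsK23) : BMGIso K23 G.toBMG := by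
  obtain ⟨a, b, hab, hV, hE, hends⟩ := h
  have hbij : Function.Bijective fun x : Bool => cond x b a := by
    refine ⟨?_, fun v => ?_⟩
    · rintro (_ | _) (_ | _) hxy <;> simp_all
    · exact (hV v).elim (fun hv => ⟨false, hv.symm⟩) fun hv => ⟨true, hv.symm⟩
  refine ⟨Equiv.ofBijective _ hbij, (Fintype.equivFinOfCardEq hE).symm, fun e => ?_⟩
  exact hends _

theorem IsP21.bmgIso_K11 [Subsingleton V] (h : G.IsP21) : BMGIso K11 G.toBMG := by
  obtain ⟨⟨-, hcard⟩, e, -⟩ := h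
  have hV : Fintype.card V = 1 :=
    Fintype.card_eq_one_iff_nonempty_unique.2 ⟨⟨⟨G.src e⟩, fun _ => Subsingleton.elim _ _⟩⟩
  have hE : Fintype.card E = 1 := by
    rw [hV] at hcard
    omega
  exact ⟨Fintype.equivOfCardEq hV.symm, Fintype.equivOfCardEq hE.symm, fun f =>
    .inl ⟨Subsingleton.elim (α := V) _ _, Subsingleton.elim (α := V) _ _⟩⟩

end Multigraph

theorem isP21_K11 : K11.G.IsP21 := by
  refine Multigraph.isP21_iff.2 ⟨(), fun X hX => ?_, rfl⟩
  have hempty : (Finset.univ : Finset K11.E).erase () = ∅ := rfl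
  rw [hempty, Multigraph.edgesIn, Finset.filter_empty, Finset.card_empty, zero_add]
  exact Nat.le_mul_of_pos_right 2 hX.card_pos

theorem isP21_K23 : K23.G.IsP21 := by
  refine Multigraph.isP21_iff.2 ⟨(0 : Fin 3), ?_, rfl⟩
  change ∀ X : Finset Bool, X.Nonempty →
    (K23.G.edgesIn ((Finset.univ : Finset (Fin 3)).erase 0) X).card + 2 ≤ 2 * X.card
  decide

theorem BMG.bmgIso_base_or_isReducible {B : BMG} (h : B.G.IsP21) :
    (BMGIso K11 B ∨ BMGIso K23 B) ∨ B.IsReducible := by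
  cases subsingleton_or_nontrivial B.V
  · exact .inl (.inl h.bmgIso_K11)
  · exact h.isReducible_or_isK23.symm.imp_left fun hK => .inr hK.bmgIso

theorem BMG.exists_reflTransGen_mStep {B : BMG} (h : B.G.IsP21) :
    ∃ A : BMG, (BMGIso K11 A ∨ BMGIso K23 A) ∧ Relation.ReflTransGen MStep A B := by
  induction hn : Fintype.card B.V using Nat.strong_induction_on generalizing B with
  | _ n ih =>
    rcases B.bmgIso_base_or_isReducible h with hbase | ⟨C, hC, hstep, hlt⟩
    · exact ⟨B, hbase, .refl⟩
    · obtain ⟨A, hA, hAC⟩ := ih _ (hn ▸ hlt) hC rfl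
      exact ⟨A, hA, hAC.tail hstep⟩

theorem isP21_of_reflTransGen_mStep {A B : BMG} (h : Relation.ReflTransGen MStep A B)
    (hA : A.G.IsP21) : B.G.IsP21 := by
  induction h with
  | refl => exact hA
  | tail _ hstep ih => exact hstep.isP21 ih

/-- A multigraph `G` is a `P(2,1)`-graph iff it can be constructed
from `K₁¹` or `K₂³` by a finite sequence of the moves 1a, 1b, 2a, 2b. -/
theorem statement_3 {V E : Type} [Fintype V] [Fintype E] [DecidableEq V] [DecidableEq E]
    (G : Multigraph V E) :
    G.IsP21 ↔
      ∃ A : BMG, (BMGIso K11 A ∨ BMGIso K23 A) ∧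
        Relation.ReflTransGen MStep A
          ⟨V, E, inferInstance, inferInstance, inferInstance, inferInstance, G⟩ := by
  refine ⟨BMG.exists_reflTransGen_mStep (B := G.toBMG), ?_⟩
  rintro ⟨A, hA, hAG⟩
  have hAP : A.G.IsP21 := hA.elim (·.isP21 isP21_K11) (·.isP21 isP21_K23)
  exact isP21_of_reflTransGen_mStep hAG hAP
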